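/- Fix K ≥ 0, B > 0, v ≥ 0, h ≥ 0, p ≥ 0, a horizon length n, and for each period t = 1,…,n a Borel probability measure μ_t on ℝ supported on [0,∞) with finite first moment. Define L_t(y) = ∫ (h·max(y−ξ,0) + p·max(ξ−y,0)) dμ_t(ξ), set C_0 ≡ 0, and recursively G_t(y) = v·y + L_t(y) + ∫ C_{t−1}(y−ξ) dμ_t(ξ) and C_t(x) = −v·x + min{ G_t(x), K + inf_{y ∈ [x, x+B]} G_t(y) }. Then for every t = 1,…,n, both G_t and C_t are (K,B)-convex, i.e., they satisfy both the (K,B)-convexity (i) and the (K,B)-convexity (ii) inequalities. -/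

import Mathlib

/-!
Three facts carry the proof.

* `(K,B)`-convexity is insensitive to linear terms, is preserved by adding a convex function, and
  passes through the average `∫ C (y - ξ) dμ(ξ)`; hence it is inherited by `G t` from `C (t - 1)`.
* The Lipschitz property is inherited along the same recursion. It supplies the integrability
  of the integrands and the continuity that makes the infimum over `[x, x + B]` a minimum.
* The ordering operator `G ↦ H`, `H x = min (G x) (K + min_{[x, x + B]} G)`, preserves
  `(K,B)`-convexity (`IsOrderValue.kbI`, `IsOrderValue.kbII`). Write `S` for the difference
  quotient `(K + H (x + a) - H x) / a`. It dominates a quotient `(K + G (x' + a) - G x') / a` with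
  `x' ≥ x` (`IsOrderValue.exists_slope`). If `S ≥ 0`, lower chords of `G` ending at `y` suffice.
  If `S < 0`, an order at `x + a` must reach beyond `x + B`, so `S` even dominates a quotient based
  at `x + B` (`IsOrderValue.exists_slope_of_neg`). This leaves room to compare with the chord that
  results from shifting the order placed at `y - b`, since that chord ends at most at `y + B`.
-/

open MeasureTheory

/-- `(K,B)`-convexity (i): for all `y ≤ x`, `0 < a ≤ B`, `0 < b ≤ B`,
`(K + g(x+a) − g(x))/a ≥ (g(y) − g(y−b))/b`. -/
def KBConvexI (K B : ℝ) (g : ℝ → ℝ) : Prop :=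
  ∀ x y a b : ℝ, y ≤ x → 0 < a → a ≤ B → 0 < b → b ≤ B →
    (g y - g (y - b)) / b ≤ (K + g (x + a) - g x) / a

/-- `(K,B)`-convexity (ii): for all `y ≤ x`, `0 < a ≤ B`,
`(K + g(x+a) − g(x))/a ≥ (K + g(y) − g(y−B))/B`. -/
def KBConvexII (K B : ℝ) (g : ℝ → ℝ) : Prop :=
  ∀ x y a : ℝ, y ≤ x → 0 < a → a ≤ B →
    (K + g y - g (y - B)) / B ≤ (K + g (x + a) - g x) / a

/-! ### The ordering operator -/

/-- `H` is the optimal cost when ordering up to `B` units at fixed cost `K` is allowed and `G` is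
the cost after ordering: `H x = min (G x) (K + min_{[x, x + B]} G)`, with the minimum attained. -/
structure IsOrderValue (K B : ℝ) (G H : ℝ → ℝ) : Prop where
  le_self : ∀ x, H x ≤ G x
  le_order : ∀ x z, x ≤ z → z ≤ x + B → H x ≤ K + G z
  attained : ∀ x, H x = G x ∨ ∃ z, x ≤ z ∧ z ≤ x + B ∧ H x = K + G z

theorem KBConvexI.mul_le {K B : ℝ} {g : ℝ → ℝ} (hg : KBConvexI K B g) {x y a b : ℝ} (hyx : y ≤ x)
    (ha : 0 < a) (haB : a ≤ B) (hb : 0 < b) (hbB : b ≤ B) :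
    (g y - g (y - b)) * a ≤ (K + g (x + a) - g x) * b :=
  (div_le_div_iff₀ hb ha).1 (hg x y a b hyx ha haB hb hbB)

theorem IsOrderValue.exists_slope {K B : ℝ} {G H : ℝ → ℝ}
    (hH : IsOrderValue K B G H) {x a : ℝ} (ha : 0 < a) :
    ∃ x', x ≤ x' ∧ (K + G (x' + a) - G x') / a ≤ (K + H (x + a) - H x) / a := by
  rcases hH.attained (x + a) with h1 | ⟨z, hz1, hz2, h1⟩
  · refine ⟨x, le_rfl, div_le_div_of_nonneg_right ?_ ha.le⟩
    linarith [hH.le_self x]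
  · refine ⟨z - a, by linarith, div_le_div_of_nonneg_right ?_ ha.le⟩
    rw [sub_add_cancel]
    linarith [hH.le_order x (z - a) (by linarith) (by linarith)]

/-- A negative quotient forces an order at `x + a` up to some `x + B + a'` with `0 < a' ≤ a`; any
smaller target would be reachable from `x` as well. -/
theorem IsOrderValue.exists_slope_of_neg {K B : ℝ} {G H : ℝ → ℝ} (hK : 0 ≤ K) (hB : 0 < B)
    (hH : IsOrderValue K B G H) {x a : ℝ} (ha : 0 < a) (haB : a ≤ B)
    (hneg : (K + H (x + a) - H x) / a < 0) :
    ∃ a', 0 < a' ∧ a' ≤ B ∧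
      (K + G (x + B + a') - G (x + B)) / a' ≤ (K + H (x + a) - H x) / a := by
  have hnum : K + H (x + a) - H x < 0 := by
    by_contra hcon
    exact absurd (div_nonneg (not_lt.1 hcon) ha.le) (not_le.2 hneg)
  rcases hH.attained (x + a) with h1 | ⟨z, hz1, hz2, h1⟩
  · linarith [hH.le_order x (x + a) (by linarith) (by linarith)]
  · have hz : x + B < z := by
      by_contra hcon
      linarith [hH.le_order x z (by linarith) (by linarith)]
    refine ⟨z - (x + B), by linarith, by linarith, ?_⟩
    have hle := hH.le_order x (x + B) (by linarith) le_rfl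
    rw [add_sub_cancel, div_le_div_iff₀ (by linarith) ha]
    have h2 : K + G z - G (x + B) ≤ K + H (x + a) - H x := by linarith
    -- the numerator is negative, so shortening the step from `a` lowers the quotient
    nlinarith [mul_le_mul_of_nonneg_right h2 ha.le,
      mul_nonneg (neg_nonneg.2 hnum.le) (by linarith : 0 ≤ a - (z - (x + B)))]

theorem IsOrderValue.kbI {K B : ℝ} {G H : ℝ → ℝ} (hK : 0 ≤ K) (hB : 0 < B)
    (hH : IsOrderValue K B G H) (hG : KBConvexI K B G) : KBConvexI K B H := by
  intro x y a b hyx ha haB hb hbB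
  obtain ⟨x', hx', hs⟩ := hH.exists_slope (x := x) ha
  rcases hH.attained (y - b) with h1 | ⟨w, hw1, hw2, h1⟩
  · refine le_trans ?_ ((hG x' y a b (hyx.trans hx') ha haB hb hbB).trans hs)
    refine div_le_div_of_nonneg_right ?_ hb.le
    linarith [hH.le_self y]
  · rcases le_or_gt 0 ((K + H (x + a) - H x) / a) with hpos | hneg
    · rcases le_or_gt y w with hyw | hyw
      · refine le_trans (div_nonpos_of_nonpos_of_nonneg ?_ hb.le) hpos
        linarith [hH.le_order y w hyw (by linarith)]
      · have hc := (hG x' y a (y - w) (hyx.trans hx') ha haB (by linarith) (by linarith)).trans hs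
        rw [sub_sub_cancel, div_le_iff₀ (by linarith)] at hc
        rw [div_le_iff₀ hb]
        have := mul_le_mul_of_nonneg_left (by linarith : y - w ≤ b) hpos
        linarith [hH.le_self y]
    · obtain ⟨a', ha', haB', hs'⟩ := hH.exists_slope_of_neg hK hB ha haB hneg
      have hc := (hG (x + B) (w + b) a' b (by linarith) ha' haB' hb hbB).trans hs'
      refine le_trans (div_le_div_of_nonneg_right ?_ hb.le) hc
      rw [add_sub_cancel_right]
      linarith [hH.le_order y (w + b) (by linarith) (by linarith)]

theorem IsOrderValue.kbII {K B : ℝ} {G H : ℝ → ℝ} (hK : 0 ≤ K) (hB : 0 < B)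
    (hH : IsOrderValue K B G H) (hG : KBConvexI K B G) (hG2 : KBConvexII K B G) :
    KBConvexII K B H := by
  intro x y a hyx ha haB
  obtain ⟨x', hx', hs⟩ := hH.exists_slope (x := x) ha
  rcases hH.attained (y - B) with h1 | ⟨w, hw1, hw2, h1⟩
  · refine le_trans ?_ ((hG2 x' y a (hyx.trans hx') ha haB).trans hs)
    refine div_le_div_of_nonneg_right ?_ hB.le
    linarith [hH.le_self y]
  · rcases le_or_gt 0 ((K + H (x + a) - H x) / a) with hpos | hneg
    · rw [div_le_iff₀ hB]
      rcases (show w ≤ y by linarith).eq_or_lt with rfl | hwy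
      · have := mul_nonneg hpos hB.le
        linarith [hH.le_self w]
      · have hc := (hG x' y a (y - w) (hyx.trans hx') ha haB (by linarith) (by linarith)).trans hs
        rw [sub_sub_cancel, div_le_iff₀ (by linarith)] at hc
        have := mul_le_mul_of_nonneg_left (by linarith : y - w ≤ B) hpos
        linarith [hH.le_self y]
    · obtain ⟨a', ha', haB', hs'⟩ := hH.exists_slope_of_neg hK hB ha haB hneg
      have hc := (hG2 (x + B) (w + B) a' (by linarith) ha' haB').trans hs'
      refine le_trans (div_le_div_of_nonneg_right ?_ hB.le) hc
      rw [add_sub_cancel_right]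
      linarith [hH.le_order y (w + B) (by linarith) (by linarith)]

theorem isOrderValue_min {K B : ℝ} (hB : 0 < B) {G : ℝ → ℝ} (hG : Continuous G) :
    IsOrderValue K B G (fun x => min (G x) (K + sInf (G '' Set.Icc x (x + B)))) where
  le_self x := min_le_left _ _
  le_order x z h1 h2 := by
    refine (min_le_right _ _).trans ?_
    gcongr
    exact csInf_le (isCompact_Icc.image hG).bddBelow ⟨z, ⟨h1, h2⟩, rfl⟩
  attained x := by
    rcases min_choice (G x) (K + sInf (G '' Set.Icc x (x + B))) with h | h
    · exact Or.inl h
    · right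
      obtain ⟨z, hz, hz'⟩ := (isCompact_Icc.image hG).sInf_mem
        ((Set.nonempty_Icc.2 (by linarith : x ≤ x + B)).image G)
      exact ⟨z, hz.1, hz.2, by rw [hz']; exact h⟩

/-- Translating an optimal order from `y` to `x` changes its cost by at most `l * |x - y|`. -/
theorem IsOrderValue.lipschitz {K B l : ℝ} {G H : ℝ → ℝ}
    (hH : IsOrderValue K B G H) (hG : ∀ x y, G x - G y ≤ l * |x - y|) (x y : ℝ) :
    H x - H y ≤ l * |x - y| := by
  rcases hH.attained y with h1 | ⟨z, hz1, hz2, h1⟩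
  · linarith [hH.le_self x, hG x y]
  · have h2 := hG (z + (x - y)) z
    rw [add_sub_cancel_left] at h2
    linarith [hH.le_order x (z + (x - y)) (by linarith) (by linarith)]

theorem continuous_of_sub_le {l : ℝ} {g : ℝ → ℝ} (hg : ∀ x y, g x - g y ≤ l * |x - y|) :
    Continuous g := by
  have hl : LipschitzWith (Real.toNNReal l) g := by
    refine LipschitzWith.of_dist_le_mul fun x y => ?_
    rw [Real.dist_eq, Real.dist_eq]
    refine le_trans ?_ (mul_le_mul_of_nonneg_right (Real.le_coe_toNNReal l) (abs_nonneg _))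
    refine abs_sub_le_iff.2 ⟨hg x y, ?_⟩
    rw [abs_sub_comm]
    exact hg y x
  exact hl.continuous

/-! ### The expectation step -/

theorem KBConvexI.add_linear {K B : ℝ} {g : ℝ → ℝ} (hg : KBConvexI K B g) (c : ℝ) :
    KBConvexI K B (fun x => c * x + g x) := by
  intro x y a b hyx ha haB hb hbB
  have h1 := hg.mul_le hyx ha haB hb hbB
  rw [div_le_div_iff₀ hb ha]
  linear_combination h1

theorem KBConvexII.add_linear {K B : ℝ} {g : ℝ → ℝ} (hg : KBConvexII K B g) (c : ℝ) :
    KBConvexII K B (fun x => c * x + g x) := by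
  intro x y a hyx ha haB
  have hB : 0 < B := ha.trans_le haB
  have h1 := (div_le_div_iff₀ hB ha).1 (hg x y a hyx ha haB)
  rw [div_le_div_iff₀ hB ha]
  linear_combination h1

/-- Monotonicity of difference quotients for the convex function `u ↦ max (u - ξ) 0`. -/
theorem hinge_slope (ξ : ℝ) {x y a b : ℝ} (hyx : y ≤ x) (ha : 0 < a) (hb : 0 < b) :
    (max (y - ξ) 0 - max (y - b - ξ) 0) * a ≤ (max (x + a - ξ) 0 - max (x - ξ) 0) * b := by
  rcases le_total ξ x with h | h
  · rw [max_eq_left (by linarith : 0 ≤ x + a - ξ), max_eq_left (by linarith : 0 ≤ x - ξ)]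
    have h1 : max (y - ξ) 0 ≤ max (y - b - ξ) 0 + b :=
      max_le (by linarith [le_max_left (y - b - ξ) 0]) (by linarith [le_max_right (y - b - ξ) 0])
    nlinarith
  · rw [max_eq_right (by linarith : y - ξ ≤ 0), max_eq_right (by linarith : y - b - ξ ≤ 0),
      max_eq_right (by linarith : x - ξ ≤ 0)]
    have := mul_nonneg (le_max_right (x + a - ξ) 0) hb.le
    linarith

/-- The cost incurred after ordering up to `y` when the demand is `ξ` and the future is valued
by `c`. -/
def demandCost (v h p : ℝ) (c : ℝ → ℝ) (ξ y : ℝ) : ℝ :=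
  v * y + (h * max (y - ξ) 0 + p * max (ξ - y) 0) + c (y - ξ)

theorem demandCost_eq (v h p : ℝ) (c : ℝ → ℝ) (ξ y : ℝ) :
    demandCost v h p c ξ y = (v - p) * y + p * ξ + (h + p) * max (y - ξ) 0 + c (y - ξ) := by
  have : max (ξ - y) 0 = max (y - ξ) 0 - (y - ξ) := by
    rcases le_total y ξ with h | h
    · rw [max_eq_left (by linarith), max_eq_right (by linarith)]; ring
    · rw [max_eq_right (by linarith), max_eq_left (by linarith)]; ring
  rw [demandCost, this]
  ring

theorem demandCost_kbI {K B v h p : ℝ} (hh : 0 ≤ h) (hp : 0 ≤ p) {c : ℝ → ℝ}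
    (hc : KBConvexI K B c) (ξ : ℝ) : KBConvexI K B (demandCost v h p c ξ) := by
  intro x y a b hyx ha haB hb hbB
  rw [div_le_div_iff₀ hb ha]
  have h1 := mul_le_mul_of_nonneg_left (hinge_slope ξ hyx ha hb) (add_nonneg hh hp)
  have h2 := hc.mul_le (sub_le_sub_right hyx ξ) ha haB hb hbB
  rw [show y - ξ - b = y - b - ξ by ring, show x - ξ + a = x + a - ξ by ring] at h2
  simp only [demandCost_eq]
  linear_combination h1 + h2

theorem demandCost_kbII {K B v h p : ℝ} (hh : 0 ≤ h) (hp : 0 ≤ p) {c : ℝ → ℝ}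
    (hc : KBConvexII K B c) (ξ : ℝ) : KBConvexII K B (demandCost v h p c ξ) := by
  intro x y a hyx ha haB
  have hB : 0 < B := ha.trans_le haB
  rw [div_le_div_iff₀ hB ha]
  have h1 := mul_le_mul_of_nonneg_left (hinge_slope ξ hyx ha hB) (add_nonneg hh hp)
  have h2 := (div_le_div_iff₀ hB ha).1 (hc (x - ξ) (y - ξ) a (sub_le_sub_right hyx ξ) ha haB)
  rw [show y - ξ - B = y - B - ξ by ring, show x - ξ + a = x + a - ξ by ring] at h2
  simp only [demandCost_eq]
  linear_combination h1 + h2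

theorem demandCost_lipschitz {v h p l : ℝ} (hh : 0 ≤ h) (hp : 0 ≤ p) {c : ℝ → ℝ}
    (hc : ∀ x y, c x - c y ≤ l * |x - y|) (ξ x y : ℝ) :
    demandCost v h p c ξ x - demandCost v h p c ξ y ≤ (|v - p| + (h + p) + l) * |x - y| := by
  have h1 : max (x - ξ) 0 - max (y - ξ) 0 ≤ |x - y| := by
    have h3 : max (x - ξ) 0 ≤ max (y - ξ) 0 + |x - y| :=
      max_le (by linarith [le_max_left (y - ξ) 0, le_abs_self (x - y)])
        (by linarith [le_max_right (y - ξ) 0, abs_nonneg (x - y)])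
    linarith
  have h2 := hc (x - ξ) (y - ξ)
  rw [sub_sub_sub_cancel_right] at h2
  have h3 := mul_le_mul_of_nonneg_left h1 (add_nonneg hh hp)
  have h4 : (v - p) * (x - y) ≤ |v - p| * |x - y| := by
    rw [← abs_mul]
    exact le_abs_self _
  rw [demandCost_eq, demandCost_eq]
  linear_combination h2 + h3 + h4

theorem integrable_comp_sub {μ : Measure ℝ} [IsProbabilityMeasure μ]
    (hmom : Integrable (fun ξ : ℝ => ξ) μ) {l : ℝ} {c : ℝ → ℝ}
    (hc : ∀ x y, c x - c y ≤ l * |x - y|) (y : ℝ) : Integrable (fun ξ => c (y - ξ)) μ := by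
  have hcont : Continuous fun ξ => c (y - ξ) :=
    (continuous_of_sub_le hc).comp (continuous_const.sub continuous_id)
  refine Integrable.mono' ((integrable_const |c y|).add (hmom.abs.const_mul l))
    hcont.aestronglyMeasurable (Filter.Eventually.of_forall fun ξ => ?_)
  have h1 := hc (y - ξ) y
  have h2 := hc y (y - ξ)
  rw [sub_sub_cancel_left, abs_neg] at h1
  rw [sub_sub_cancel] at h2
  rw [Real.norm_eq_abs, abs_le]
  simp only [Pi.add_apply]
  constructor
  · linarith [neg_abs_le (c y)]
  · linarith [le_abs_self (c y)]

theorem integrable_hinge {μ : Measure ℝ} [IsProbabilityMeasure μ]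
    (hmom : Integrable (fun ξ : ℝ => ξ) μ) (h p y : ℝ) :
    Integrable (fun ξ => h * max (y - ξ) 0 + p * max (ξ - y) 0) μ :=
  (((integrable_const y).sub hmom).pos_part.const_mul h).add
    ((hmom.sub (integrable_const y)).pos_part.const_mul p)

theorem kbI_integral {K B : ℝ} {μ : Measure ℝ} [IsProbabilityMeasure μ] {F : ℝ → ℝ → ℝ}
    (hint : ∀ y, Integrable (fun ξ => F ξ y) μ) (hF : ∀ ξ, KBConvexI K B (F ξ)) :
    KBConvexI K B (fun y => ∫ ξ, F ξ y ∂μ) := by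
  intro x y a b hyx ha haB hb hbB
  have hi1 : Integrable (fun ξ => F ξ y - F ξ (y - b)) μ := (hint _).sub (hint _)
  have hi2 : Integrable (fun ξ => K + F ξ (x + a)) μ := (integrable_const K).add (hint _)
  have hi3 : Integrable (fun ξ => K + F ξ (x + a) - F ξ x) μ := hi2.sub (hint _)
  have key := integral_mono (hi1.div_const b) (hi3.div_const a)
    fun ξ => hF ξ x y a b hyx ha haB hb hbB
  simpa only [integral_div, integral_sub (hint y) (hint (y - b)), integral_sub hi2 (hint x),
    integral_add (integrable_const K) (hint (x + a)), integral_const, probReal_univ, one_smul]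
    using key

theorem kbII_integral {K B : ℝ} {μ : Measure ℝ} [IsProbabilityMeasure μ] {F : ℝ → ℝ → ℝ}
    (hint : ∀ y, Integrable (fun ξ => F ξ y) μ) (hF : ∀ ξ, KBConvexII K B (F ξ)) :
    KBConvexII K B (fun y => ∫ ξ, F ξ y ∂μ) := by
  intro x y a hyx ha haB
  have hi0 : Integrable (fun ξ => K + F ξ y) μ := (integrable_const K).add (hint _)
  have hi1 : Integrable (fun ξ => K + F ξ y - F ξ (y - B)) μ := hi0.sub (hint _)
  have hi2 : Integrable (fun ξ => K + F ξ (x + a)) μ := (integrable_const K).add (hint _)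
  have hi3 : Integrable (fun ξ => K + F ξ (x + a) - F ξ x) μ := hi2.sub (hint _)
  have key := integral_mono (hi1.div_const B) (hi3.div_const a)
    fun ξ => hF ξ x y a hyx ha haB
  simpa only [integral_div, integral_sub hi0 (hint (y - B)), integral_sub hi2 (hint x),
    integral_add (integrable_const K) (hint (x + a)), integral_add (integrable_const K) (hint y),
    integral_const, probReal_univ, one_smul]
    using key

theorem lipschitz_integral {l : ℝ} {μ : Measure ℝ} [IsProbabilityMeasure μ] {F : ℝ → ℝ → ℝ}
    (hint : ∀ y, Integrable (fun ξ => F ξ y) μ)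
    (hF : ∀ ξ x y, F ξ x - F ξ y ≤ l * |x - y|) (x y : ℝ) :
    ∫ ξ, F ξ x ∂μ - ∫ ξ, F ξ y ∂μ ≤ l * |x - y| := by
  rw [← integral_sub (hint x) (hint y)]
  refine (integral_mono ((hint x).sub (hint y)) (integrable_const (l * |x - y|))
    fun ξ => hF ξ x y).trans ?_
  simp

/-! ### The recursion -/

/-- The cost-to-go functions `G_t` and `C_t` of the single-item capacitated stochastic
inventory problem with fixed ordering cost `K ≥ 0`, order capacity `B > 0`, unit ordering
cost `v ≥ 0`, holding cost `h ≥ 0`, penalty cost `p ≥ 0`, and demand distribution `μ t`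
in period `t` (a Borel probability measure on `ℝ` supported on `[0,∞)` with finite first
moment) are `(K,B)`-convex for every period `t = 1, …, n`. -/
theorem capacitated_cost_to_go_KB_convex
    (K B v h p : ℝ) (hK : 0 ≤ K) (hB : 0 < B) (hv : 0 ≤ v) (hh : 0 ≤ h) (hp : 0 ≤ p)
    (n : ℕ) (μ : ℕ → Measure ℝ)
    (hprob : ∀ t, 1 ≤ t → t ≤ n → IsProbabilityMeasure (μ t))
    (hsupp : ∀ t, 1 ≤ t → t ≤ n → μ t (Set.Iio 0) = 0)
    (hmom : ∀ t, 1 ≤ t → t ≤ n → Integrable (fun ξ : ℝ => ξ) (μ t))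
    (L G C : ℕ → ℝ → ℝ)
    (hL : ∀ t, 1 ≤ t → t ≤ n → ∀ y : ℝ,
      L t y = ∫ ξ, (h * max (y - ξ) 0 + p * max (ξ - y) 0) ∂(μ t))
    (hC0 : ∀ x : ℝ, C 0 x = 0)
    (hG : ∀ t, 1 ≤ t → t ≤ n → ∀ y : ℝ,
      G t y = v * y + L t y + ∫ ξ, C (t - 1) (y - ξ) ∂(μ t))
    (hC : ∀ t, 1 ≤ t → t ≤ n → ∀ x : ℝ,
      C t x = -v * x + min (G t x) (K + sInf (G t '' Set.Icc x (x + B)))) :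
    ∀ t, 1 ≤ t → t ≤ n →
      (KBConvexI K B (G t) ∧ KBConvexII K B (G t)) ∧
      (KBConvexI K B (C t) ∧ KBConvexII K B (C t)) := by
  have step : ∀ t, 1 ≤ t → t ≤ n →
      ((∃ l, ∀ x y, C (t - 1) x - C (t - 1) y ≤ l * |x - y|) ∧
        KBConvexI K B (C (t - 1)) ∧ KBConvexII K B (C (t - 1))) →
      (KBConvexI K B (G t) ∧ KBConvexII K B (G t)) ∧
        ((∃ l, ∀ x y, C t x - C t y ≤ l * |x - y|) ∧
          KBConvexI K B (C t) ∧ KBConvexII K B (C t)) := by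
    rintro t ht htn ⟨⟨l, hl⟩, hI, hII⟩
    have := hprob t ht htn
    have hm := hmom t ht htn
    have hint : ∀ y, Integrable (fun ξ => demandCost v h p (C (t - 1)) ξ y) (μ t) := fun y =>
      ((integrable_const (v * y)).add (integrable_hinge hm h p y)).add
        (integrable_comp_sub hm hl y)
    have hGeq : G t = fun y => ∫ ξ, demandCost v h p (C (t - 1)) ξ y ∂(μ t) := by
      funext y
      have h1 : Integrable (fun ξ => v * y + (h * max (y - ξ) 0 + p * max (ξ - y) 0)) (μ t) :=
        (integrable_const (v * y)).add (integrable_hinge hm h p y)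
      simp only [demandCost]
      rw [hG t ht htn, hL t ht htn, integral_add h1 (integrable_comp_sub hm hl y),
        integral_add (integrable_const (v * y)) (integrable_hinge hm h p y)]
      simp
    have hGI : KBConvexI K B (G t) := by
      rw [hGeq]
      exact kbI_integral hint fun ξ => demandCost_kbI hh hp hI ξ
    have hGII : KBConvexII K B (G t) := by
      rw [hGeq]
      exact kbII_integral hint fun ξ => demandCost_kbII hh hp hII ξ
    have hGL : ∀ x y, G t x - G t y ≤ (|v - p| + (h + p) + l) * |x - y| := by
      rw [hGeq]
      exact lipschitz_integral hint fun ξ => demandCost_lipschitz hh hp hl ξ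
    have hH := isOrderValue_min (K := K) hB (continuous_of_sub_le hGL)
    have hCeq : C t = fun x => -v * x + min (G t x) (K + sInf (G t '' Set.Icc x (x + B))) :=
      funext (hC t ht htn)
    refine ⟨⟨hGI, hGII⟩, ⟨|v| + (|v - p| + (h + p) + l), fun x y => ?_⟩, ?_, ?_⟩
    · have h1 := hH.lipschitz hGL x y
      have h2 : -v * (x - y) ≤ |v| * |x - y| := by
        rw [← abs_neg v, ← abs_mul]
        exact le_abs_self _
      rw [hCeq]
      linear_combination h1 + h2
    · rw [hCeq]
      exact (hH.kbI hK hB hGI).add_linear (-v)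
    · rw [hCeq]
      exact (hH.kbII hK hB hGI hGII).add_linear (-v)
  have main : ∀ t, t ≤ n → (∃ l, ∀ x y, C t x - C t y ≤ l * |x - y|) ∧
      KBConvexI K B (C t) ∧ KBConvexII K B (C t) := by
    intro t
    induction t with
    | zero =>
      refine fun _ => ⟨⟨0, by simp [hC0]⟩, ?_, ?_⟩
      · intro x y a b _ ha _ _ _
        simp only [hC0, sub_self, zero_div, add_zero, sub_zero]
        exact div_nonneg hK ha.le
      · intro x y a _ ha haB
        simp only [hC0, add_zero, sub_zero]
        exact div_le_div_of_nonneg_left hK ha haB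
    | succ k ih => exact fun hk => (step (k + 1) (by omega) hk (ih (by omega))).2
  intro t ht htn
  have h1 := step t ht htn (main (t - 1) (by omega))
  exact ⟨h1.1, h1.2.2⟩
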